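/- Let k ≥ 1 and n be natural numbers, and let ε : Fin n → ℤ satisfy ε_i ∈ {1,−1} for all i. Set σ = Σ_i ε_i. Then (2k)^{−n/2} · e^{iπσ/4} · Σ_{m} exp(−(2πi/(4k)) Σ_i ε_i m_i²) = 1, where the sum runs over all functions m : Fin n → {0,1,…,2k−1}. Consequently, if M₀ is a homology 3-sphere, its U(1) Reshetikhin–Turaev invariant satisfies I_k(M₀) = 1. -/

import Mathlib

open Complex Finset

/-!
The exponential of the diagonal form factors, so the invariant is a product of one-variable
quadratic Gauss sums, and everything reduces to `∑ exp (π i m² / N) = √N exp (π i / 4)`, summed over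
`0 ≤ m < N` for even `N`. This evaluation comes from the behaviour of the Jacobi theta function at
the cusp `1 / N`, computed twice for `τ = 1 / N + i t` with `t → 0⁺`. Splitting the theta series by
residues modulo `N` shows that `√t θ(τ)` tends to the Gauss sum divided by `N`. On the other hand,
`θ` has even period `N` and is modular under `τ ↦ -1 / τ`, which relates `θ(τ)` to `θ(w)` for
`w = -1 / N + i / (N² t)`; there `Im w → ∞` and `θ(w) → 1`.
-/

open Filter Topology HurwitzZeta
open scoped Real ComplexConjugate

lemma ofReal_mul_cpow {r : ℝ} (hr : 0 < r) (z c : ℂ) :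
    ((r : ℂ) * z) ^ c = (r : ℂ) ^ c * z ^ c := by
  have hr' : (r : ℂ) ≠ 0 := ofReal_ne_zero.2 hr.ne'
  rcases eq_or_ne z 0 with rfl | hz
  · rcases eq_or_ne c 0 with rfl | hc
    · simp
    · simp [zero_cpow hc]
  · rw [cpow_def_of_ne_zero (mul_ne_zero hr' hz), cpow_def_of_ne_zero hr', cpow_def_of_ne_zero hz,
      ← Complex.exp_add, log_ofReal_mul hr hz, ofReal_log hr.le, add_mul]

lemma ofReal_cpow_one_half {r : ℝ} (hr : 0 ≤ r) : (r : ℂ) ^ (1 / 2 : ℂ) = √r := by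
  rw [Real.sqrt_eq_rpow, ofReal_cpow hr]
  norm_num

lemma neg_I_cpow_one_half : (-I) ^ (1 / 2 : ℂ) = exp (-(π * I / 4)) := by
  rw [cpow_def_of_ne_zero (neg_ne_zero.2 I_ne_zero), log_neg_I]
  congr 1
  ring

lemma neg_I_div_cpow_one_half {r : ℝ} (hr : 0 < r) :
    (-I / r) ^ (1 / 2 : ℂ) = (√r * exp (π * I / 4))⁻¹ := by
  have factor : -I / r = ((r⁻¹ : ℝ) : ℂ) * -I := by
    push_cast
    ring
  rw [factor, ofReal_mul_cpow (inv_pos.2 hr), ofReal_cpow_one_half (inv_pos.2 hr).le,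
    neg_I_cpow_one_half, Real.sqrt_inv, ofReal_inv, Complex.exp_neg, mul_inv]

lemma tendsto_jacobiTheta_comap_im_atTop : Tendsto jacobiTheta (comap im atTop) (𝓝 1) := by
  have exp_decay : Tendsto (fun τ : ℂ ↦ Real.exp (-π * τ.im)) (comap im atTop) (𝓝 0) :=
    Real.tendsto_exp_atBot.comp
      (tendsto_comap.const_mul_atTop_of_neg (neg_lt_zero.2 Real.pi_pos))
  simpa using (isBigO_at_im_infty_jacobiTheta_sub_one.trans_tendsto exp_decay).add_const 1

lemma tendsto_jacobiTheta_add_I_mul_atTop (z : ℂ) :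
    Tendsto (fun s : ℝ ↦ jacobiTheta (z + I * s)) atTop (𝓝 1) := by
  refine tendsto_jacobiTheta_comap_im_atTop.comp (tendsto_comap_iff.2 ?_)
  simpa [Function.comp_def] using tendsto_atTop_add_const_left atTop z.im tendsto_id

lemma tendsto_cosKernel_atTop (a : UnitAddCircle) : Tendsto (cosKernel a) atTop (𝓝 1) := by
  obtain ⟨p, hp, hO⟩ := isBigO_atTop_cosKernel_sub a
  have exp_decay : Tendsto (fun x : ℝ ↦ Real.exp (-p * x)) atTop (𝓝 0) :=
    Real.tendsto_exp_atBot.comp (tendsto_id.const_mul_atTop_of_neg (neg_lt_zero.2 hp))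
  simpa using (hO.trans_tendsto exp_decay).add_const 1

lemma tendsto_sqrt_mul_evenKernel (a : UnitAddCircle) :
    Tendsto (fun x ↦ √x * evenKernel a x) (𝓝[>] 0) (𝓝 1) := by
  refine ((tendsto_cosKernel_atTop a).comp tendsto_inv_nhdsGT_zero).congr' ?_
  filter_upwards [self_mem_nhdsWithin] with x (hx : 0 < x)
  have hx' : √x ≠ 0 := (Real.sqrt_pos.2 hx).ne'
  rw [evenKernel_functional_equation, ← Real.sqrt_eq_rpow, Function.comp_apply, one_div x]
  field_simp

lemma tendsto_const_mul_nhdsGT_zero {c : ℝ} (hc : 0 < c) :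
    Tendsto (fun t : ℝ ↦ c * t) (𝓝[>] 0) (𝓝[>] 0) := by
  simpa using TendstoNhdsWithinIoi.const_mul hc (tendsto_id (x := 𝓝[>] (0 : ℝ)))

lemma jacobiTheta_neg_one_div {τ : ℂ} (hτ : τ ≠ 0) :
    jacobiTheta (-1 / τ) = (-I * τ) ^ (1 / 2 : ℂ) * jacobiTheta τ := by
  have hτ' : (-I * τ) ^ (1 / 2 : ℂ) ≠ 0 := by simp [cpow_eq_zero_iff, hτ]
  have functional_eq : jacobiTheta τ = 1 / (-I * τ) ^ (1 / 2 : ℂ) * jacobiTheta (-1 / τ) := by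
    simpa [jacobiTheta_eq_jacobiTheta₂] using jacobiTheta₂_functional_equation 0 τ
  rw [functional_eq, ← mul_assoc, mul_one_div_cancel hτ', one_mul]

lemma jacobiTheta_periodic_of_even {N : ℤ} (hN : Even N) :
    Function.Periodic jacobiTheta (N : ℂ) := by
  obtain ⟨r, rfl⟩ := hN
  have periodic_two : Function.Periodic jacobiTheta 2 := fun τ ↦ by
    rw [add_comm, jacobiTheta_two_add]
  simpa [mul_two] using periodic_two.int_mul r

lemma cpow_mul_jacobiTheta_eq_of_neg_one_div_eq {N : ℤ} (hN : Even N) {τ w : ℂ} (hτ : τ ≠ 0)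
    (hw : w ≠ 0) (h : -1 / w = -1 / τ + N) :
    (-I * w) ^ (1 / 2 : ℂ) * jacobiTheta w = (-I * τ) ^ (1 / 2 : ℂ) * jacobiTheta τ := by
  rw [← jacobiTheta_neg_one_div hw, ← jacobiTheta_neg_one_div hτ, h,
    jacobiTheta_periodic_of_even hN]

/-- The quadratic Gauss sum `∑ exp (π i a m² / N)` over `0 ≤ m < N`. The exponent carries `π i`
rather than `2 π i`, so the summand depends only on `m` modulo `N` when `a * N` is even. -/
noncomputable def quadraticGaussSum (a : ℤ) (N : ℕ) : ℂ :=
  ∑ m : Fin N, exp (π * I * a * (m : ℕ) ^ 2 / N)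

lemma quadraticGaussSum_neg (a : ℤ) (N : ℕ) :
    quadraticGaussSum (-a) N = conj (quadraticGaussSum a N) := by
  simp only [quadraticGaussSum, map_sum, ← exp_conj]
  simp

lemma sum_exp_diagonal_form {ι : Type*} [Fintype ι] [DecidableEq ι] (N : ℕ) (a : ι → ℤ) :
    ∑ m : ι → Fin N, exp (π * I / N * ∑ i, (a i : ℂ) * ((m i : ℕ) : ℂ) ^ 2) =
      ∏ i, quadraticGaussSum (a i) N := by
  simp only [quadraticGaussSum, Fintype.prod_sum, ← Complex.exp_sum, mul_sum]
  exact sum_congr rfl fun m _ ↦ congrArg exp (sum_congr rfl fun i _ ↦ by ring)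

section Cusp

variable {a : ℤ} {N : ℕ} [NeZero N]

lemma jacobiTheta₂_term_div_add_I_mul (haN : Even (a * N)) (t : ℝ) (m : ℕ) (j : ℤ) :
    jacobiTheta₂_term (m + N * j) 0 (a / N + I * t) =
      exp (π * I * a * m ^ 2 / N) * Real.exp (-π * (j + (m / N : ℝ)) ^ 2 * (N ^ 2 * t)) := by
  obtain ⟨r, hr⟩ := haN
  have hr' : (a * N : ℂ) = r + r := by exact_mod_cast hr
  have hN : (N : ℂ) ≠ 0 := NeZero.ne _
  rw [jacobiTheta₂_term, ofReal_exp, ← Complex.exp_add, exp_eq_exp_iff_exists_int]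
  refine ⟨a * m * j + r * j ^ 2, ?_⟩
  push_cast
  field_simp
  linear_combination I * N * j ^ 2 * hr' + t * N * (m + N * j) ^ 2 * I_sq

lemma jacobiTheta_div_add_I_mul (haN : Even (a * N)) {t : ℝ} (ht : 0 < t) :
    jacobiTheta (a / N + I * t) = ∑ m : Fin N, exp (π * I * a * (m : ℕ) ^ 2 / N) *
      (evenKernel (((m : ℕ) / N : ℝ) : UnitAddCircle) (N ^ 2 * t) : ℂ) := by
  have hN : (0 : ℝ) < N := by exact_mod_cast NeZero.pos N
  have him : 0 < (a / N + I * t : ℂ).im := by simpa using ht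
  have theta_sum := hasSum_jacobiTheta₂_term 0 him
  rw [← jacobiTheta_eq_jacobiTheta₂, ← (Int.divModEquiv N).symm.hasSum_iff,
    ← (Equiv.prodComm (Fin N) ℤ).hasSum_iff] at theta_sum
  refine (theta_sum.prod_fiberwise fun m ↦ ?_).unique (hasSum_fintype _)
  have kernel_sum := hasSum_int_evenKernel ((m : ℕ) / N : ℝ) (t := N ^ 2 * t) (by positivity)
  convert! (hasSum_ofReal.2 kernel_sum).mul_left (exp (π * I * a * (m : ℕ) ^ 2 / N)) using 2 with j
  rw [← jacobiTheta₂_term_div_add_I_mul haN]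
  simp [add_comm, mul_comm]

lemma tendsto_sqrt_mul_jacobiTheta_div_add_I_mul (haN : Even (a * N)) :
    Tendsto (fun t : ℝ ↦ √t * jacobiTheta (a / N + I * t)) (𝓝[>] 0)
      (𝓝 (quadraticGaussSum a N / N)) := by
  have hN : (0 : ℝ) < N := by exact_mod_cast NeZero.pos N
  have residue_limit (m : Fin N) : Tendsto (fun t : ℝ ↦ exp (π * I * a * (m : ℕ) ^ 2 / N) *
      ((√(N ^ 2 * t) * evenKernel (((m : ℕ) / N : ℝ) : UnitAddCircle) (N ^ 2 * t) : ℝ) : ℂ))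
      (𝓝[>] 0) (𝓝 (exp (π * I * a * (m : ℕ) ^ 2 / N))) := by
    simpa using ((continuous_ofReal.tendsto 1).comp ((tendsto_sqrt_mul_evenKernel _).comp
      (tendsto_const_mul_nhdsGT_zero (pow_pos hN 2)))).const_mul _
  refine ((tendsto_finsetSum univ fun m _ ↦ residue_limit m).div_const (N : ℂ)).congr' ?_
  filter_upwards [self_mem_nhdsWithin] with t ht
  have hN' : (N : ℂ) ≠ 0 := NeZero.ne _
  rw [jacobiTheta_div_add_I_mul haN ht, sum_div, mul_sum]
  refine sum_congr rfl fun m _ ↦ ?_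
  rw [Real.sqrt_mul (by positivity), Real.sqrt_sq hN.le]
  push_cast
  field_simp

end Cusp

section GaussSum

variable {N : ℕ} [NeZero N]

lemma cpow_mul_sqrt_mul_jacobiTheta_eq (hN : Even N) {t : ℝ} (ht : 0 < t) :
    (-I * (1 / N + I * t)) ^ (1 / 2 : ℂ) * (√t * jacobiTheta (1 / N + I * t)) =
      (1 / N ^ 2 + I * t / N) ^ (1 / 2 : ℂ) *
        jacobiTheta (-1 / N + I * ((N ^ 2 * t)⁻¹ : ℝ)) := by
  set τ : ℂ := 1 / N + I * t with hτ_def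
  set w : ℂ := -1 / N + I * ((N ^ 2 * t)⁻¹ : ℝ) with hw_def
  have hN0 : (N : ℂ) ≠ 0 := NeZero.ne _
  have ht0 : (t : ℂ) ≠ 0 := ofReal_ne_zero.2 ht.ne'
  have hτ : τ ≠ 0 := fun h ↦ ht.ne' (by simpa [hτ_def] using congrArg im h)
  have w_eq : w = I * τ / (N * t) := by
    rw [hw_def, hτ_def]
    push_cast
    field_simp
    linear_combination -N * t * I_sq
  have hw : w ≠ 0 := by
    rw [w_eq]
    exact div_ne_zero (mul_ne_zero I_ne_zero hτ) (mul_ne_zero hN0 ht0)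
  have modular : -1 / w = -1 / τ + (N : ℤ) := by
    rw [w_eq, Int.cast_natCast]
    field_simp
    rw [hτ_def]
    field_simp
    linear_combination -t * N * I_sq
  have scaled_w : (t : ℂ) * (-I * w) = 1 / N ^ 2 + I * t / N := by
    rw [hw_def]
    push_cast
    field_simp
    linear_combination -I_sq
  rw [mul_left_comm,
    ← cpow_mul_jacobiTheta_eq_of_neg_one_div_eq (by exact_mod_cast hN) hτ hw modular,
    ← mul_assoc, ← ofReal_cpow_one_half ht.le, ← ofReal_mul_cpow ht, scaled_w]

lemma tendsto_cpow_mul_sqrt_mul_jacobiTheta (hN : Even N) :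
    Tendsto (fun t : ℝ ↦ (-I * (1 / N + I * t)) ^ (1 / 2 : ℂ) *
      (√t * jacobiTheta (1 / N + I * t))) (𝓝[>] 0) (𝓝 (1 / N)) := by
  have hNpos : (0 : ℝ) < N := by exact_mod_cast NeZero.pos N
  have value_zero : ((1 / N ^ 2 : ℝ) : ℂ) ^ (1 / 2 : ℂ) = 1 / N := by
    rw [ofReal_cpow_one_half (by positivity)]
    simp
  have factor_continuousAt : ContinuousAt
      (fun t : ℝ ↦ (1 / N ^ 2 + I * t / N : ℂ) ^ (1 / 2 : ℂ)) 0 := by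
    refine ContinuousAt.cpow (by fun_prop) continuousAt_const ?_
    have : ((1 / N ^ 2 : ℝ) : ℂ) ∈ slitPlane := ofReal_mem_slitPlane.2 (by positivity)
    simpa using this
  have factor_limit : Tendsto (fun t : ℝ ↦ (1 / N ^ 2 + I * t / N : ℂ) ^ (1 / 2 : ℂ)) (𝓝[>] 0)
      (𝓝 (1 / N)) := by
    simpa [← value_zero] using factor_continuousAt.tendsto.mono_left nhdsWithin_le_nhds
  have theta_limit : Tendsto (fun t : ℝ ↦ jacobiTheta (-1 / N + I * ((N ^ 2 * t)⁻¹ : ℝ))) (𝓝[>] 0)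
      (𝓝 1) :=
    (tendsto_jacobiTheta_add_I_mul_atTop _).comp
      (tendsto_inv_nhdsGT_zero.comp (tendsto_const_mul_nhdsGT_zero (pow_pos hNpos 2)))
  have product_limit := factor_limit.mul theta_limit
  rw [mul_one] at product_limit
  exact product_limit.congr'
    (eventually_nhdsWithin_of_forall fun t ht ↦ (cpow_mul_sqrt_mul_jacobiTheta_eq hN ht).symm)

lemma neg_I_div_cpow_mul_quadraticGaussSum_one (hN : Even N) :
    (-I / N) ^ (1 / 2 : ℂ) * quadraticGaussSum 1 N = 1 := by
  have hN0 : (N : ℂ) ≠ 0 := NeZero.ne _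
  have factor_continuousAt : ContinuousAt
      (fun t : ℝ ↦ (-I * (1 / N + I * t) : ℂ) ^ (1 / 2 : ℂ)) 0 := by
    refine ContinuousAt.cpow (by fun_prop) continuousAt_const (.inr ?_)
    simpa using NeZero.ne N
  have factor_limit : Tendsto (fun t : ℝ ↦ (-I * (1 / N + I * t)) ^ (1 / 2 : ℂ)) (𝓝[>] 0)
      (𝓝 ((-I / N) ^ (1 / 2 : ℂ))) := by
    simpa [div_eq_mul_inv] using factor_continuousAt.tendsto.mono_left nhdsWithin_le_nhds
  have gauss_limit : Tendsto (fun t : ℝ ↦ √t * jacobiTheta (1 / N + I * t)) (𝓝[>] 0)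
      (𝓝 (quadraticGaussSum 1 N / N)) := by
    simpa using tendsto_sqrt_mul_jacobiTheta_div_add_I_mul (a := 1) (N := N) (by simpa using hN)
  have limits_eq := tendsto_nhds_unique (factor_limit.mul gauss_limit)
    (tendsto_cpow_mul_sqrt_mul_jacobiTheta hN)
  rwa [← mul_div_assoc, div_left_inj' hN0] at limits_eq

lemma quadraticGaussSum_one (hN : Even N) :
    quadraticGaussSum 1 N = √N * exp (π * I / 4) := by
  have hNpos : (0 : ℝ) < N := by exact_mod_cast NeZero.pos N
  have hne : √N * exp (π * I / 4) ≠ 0 :=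
    mul_ne_zero (ofReal_ne_zero.2 (Real.sqrt_pos.2 hNpos).ne') (Complex.exp_ne_zero _)
  have h := neg_I_div_cpow_mul_quadraticGaussSum_one hN
  rw [← ofReal_natCast N, neg_I_div_cpow_one_half hNpos] at h
  exact ((inv_mul_eq_one₀ hne).1 h).symm

lemma quadraticGaussSum_of_eq_one_or_neg_one (hN : Even N) {e : ℤ} (he : e = 1 ∨ e = -1) :
    quadraticGaussSum e N = √N * exp (π * I * e / 4) := by
  rcases he with rfl | rfl
  · simpa using quadraticGaussSum_one hN
  · rw [quadraticGaussSum_neg, quadraticGaussSum_one hN, map_mul, conj_ofReal, ← exp_conj]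
    simp [map_ofNat]

lemma prod_quadraticGaussSum {ι : Type*} [Fintype ι] (hN : Even N) {a : ι → ℤ}
    (ha : ∀ i, a i = 1 ∨ a i = -1) :
    ∏ i, quadraticGaussSum (a i) N =
      (√N : ℂ) ^ Fintype.card ι * exp (π * I * (∑ i, a i : ℤ) / 4) := by
  simp only [fun i ↦ quadraticGaussSum_of_eq_one_or_neg_one hN (ha i), prod_mul_distrib, prod_const,
    card_univ, ← Complex.exp_sum, Int.cast_sum, mul_sum, sum_div]

end GaussSum

/-- For a surgery presentation of a homology 3-sphere by an algebraically split link
with surgery coefficients `ε i = ±1` (linking matrix diagonal with entries `ε i`,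
signature `σ = Σ_i ε i`), the `U(1)` Reshetikhin–Turaev invariant equals `1`:
`(2k)^{-n/2} e^{iπσ/4} Σ_m exp(-(2πi/(4k)) Σ_i ε_i m_i²) = 1`, the sum running over
all colour assignments `m : Fin n → {0,…,2k-1}`. -/
theorem rt_invariant_homology_sphere (k n : ℕ) (hk : 1 ≤ k)
    (ε : Fin n → ℤ) (hε : ∀ i, ε i = 1 ∨ ε i = -1)
    (σ : ℤ) (hσ : σ = ∑ i : Fin n, ε i) :
    ((Real.sqrt (2 * k) : ℂ) ^ n)⁻¹ *
      Complex.exp (Real.pi * Complex.I * (σ : ℂ) / 4) *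
      (∑ m : Fin n → Fin (2 * k),
        Complex.exp (-(2 * Real.pi * Complex.I / (4 * (k : ℂ))) *
          (∑ i : Fin n, (ε i : ℂ) * ((m i : ℕ) : ℂ) ^ 2))) = 1 := by
  have : NeZero (2 * k) := ⟨by omega⟩
  have hsqrt : (√(2 * k) : ℂ) ≠ 0 := by
    rw [ofReal_ne_zero]
    positivity
  have hε_neg : ∀ i, -ε i = 1 ∨ -ε i = -1 := fun i ↦ by have := hε i; omega
  have colour_sum : ∑ m : Fin n → Fin (2 * k), exp (-(2 * π * I / (4 * (k : ℂ))) *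
      ∑ i, (ε i : ℂ) * ((m i : ℕ) : ℂ) ^ 2) = ∏ i, quadraticGaussSum (-ε i) (2 * k) := by
    rw [← sum_exp_diagonal_form]
    refine sum_congr rfl fun m _ ↦ congrArg exp ?_
    simp only [Int.cast_neg, neg_mul, sum_neg_distrib, mul_neg]
    push_cast
    ring
  rw [colour_sum, prod_quadraticGaussSum (even_two_mul k) hε_neg, sum_neg_distrib, ← hσ,
    Fintype.card_fin, Int.cast_neg, mul_neg, neg_div, Complex.exp_neg]
  push_cast
  field_simp
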